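/- Let X and Y be finite nonempty alphabets, P_X a probability mass function on X with P_X(x) > 0 for all x, and W a channel with W(y|x) > 0 for all x, y and Σ_y W(y|x) = 1 for each x. Let I(X;Y) = Σ_{x,y} P_X(x) W(y|x) log₂( W(y|x) / Σ_{x'} P_X(x') W(y|x') ) be the mutual information induced by P_X and W, and let U_MAP(x,y) = P_X(x) W(y|x). Then for every R < I(X;Y), E_r(R, U_MAP) = max_{ρ∈[0,1]} sup_{θ≥0} { −Σ_x P_X(x) log₂( Σ_y W(y|x) / U_θ(x|y)^ρ ) + ρ(H(P_X) − R) } > 0, where U_θ(x|y) = U_MAP(x,y)^θ / Σ_{x'} U_MAP(x',y)^θ. In particular, the mismatched MAP metric achieves every rate below I(X;Y). -/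

import Mathlib

/-- Base-2 entropy of a probability mass function on a finite alphabet. -/
noncomputable def entropy2 {X : Type*} [Fintype X] (P : X → ℝ) : ℝ :=
  -∑ x, P x * Real.logb 2 (P x)

/-- The normalized metric `U_θ(x|y) = U(x,y)^θ / Σ_{x'} U(x',y)^θ`. -/
noncomputable def Utheta {X Y : Type*} [Fintype X] (U : X → Y → ℝ) (θ : ℝ)
    (x : X) (y : Y) : ℝ :=
  U x y ^ θ / ∑ x', U x' y ^ θ

/-!
At `ρ = 0` the function maximised in the error exponent vanishes, and its derivative there is
`H(P) + ∑ P W log₂ U_θ - R`. So a decoding metric achieves every rate below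
`H(P) + ∑ P W log₂ U_θ`, for any `θ ≥ 0`. For the MAP metric at `θ = 1`, `U_θ(x|y)` is the posterior
of `x` given `y`, and this rate is `H(X) - H(X|Y) = I(X;Y)`.
-/

section WeightedSums

variable {Y : Type*} [Fintype Y] {w u : Y → ℝ}

theorem one_le_sum_div_rpow (hw : w ∈ stdSimplex ℝ Y) (hu : ∀ y, w y ≠ 0 → 0 < u y)
    (hu_le : ∀ y, u y ≤ 1) {ρ : ℝ} (hρ : 0 ≤ ρ) : 1 ≤ ∑ y, w y / u y ^ ρ := by
  rw [← hw.2]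
  refine Finset.sum_le_sum fun y _ => ?_
  obtain h | h := eq_or_ne (w y) 0
  · simp [h]
  · exact le_div_self (hw.1 y) (Real.rpow_pos_of_pos (hu y h) ρ)
      (Real.rpow_le_one (hu y h).le (hu_le y) hρ)

theorem hasDerivAt_div_rpow_zero {a c : ℝ} (hc : a ≠ 0 → 0 < c) :
    HasDerivAt (fun ρ : ℝ => a / c ^ ρ) (-(a * Real.log c)) 0 := by
  obtain rfl | ha := eq_or_ne a 0
  · simpa using hasDerivAt_const (0 : ℝ) (0 : ℝ)
  · simpa [div_eq_mul_inv] using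
      (((hasDerivAt_id (0 : ℝ)).const_rpow (hc ha)).fun_inv (by simp)).const_mul a

theorem hasDerivAt_logb_sum_div_rpow_zero (b : ℝ) (hw : ∑ y, w y = 1)
    (hu : ∀ y, w y ≠ 0 → 0 < u y) :
    HasDerivAt (fun ρ : ℝ => Real.logb b (∑ y, w y / u y ^ ρ))
      (-∑ y, w y * Real.logb b (u y)) 0 := by
  have hsum : HasDerivAt (fun ρ : ℝ => ∑ y, w y / u y ^ ρ) (∑ y, -(w y * Real.log (u y))) 0 :=
    HasDerivAt.fun_sum fun y _ => hasDerivAt_div_rpow_zero (hu y)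
  refine ((hsum.log (by simp [hw])).div_const (Real.log b)).congr_deriv ?_
  simp [Real.logb, hw, Finset.sum_div, mul_div_assoc, neg_div]

end WeightedSums

theorem exists_mem_Ioo_lt_of_hasDerivAt_pos {f : ℝ → ℝ} {f' a b : ℝ} (hf : HasDerivAt f f' a)
    (hf' : 0 < f') (hab : a < b) : ∃ t ∈ Set.Ioo a b, f a < f t := by
  have hslope : ∀ᶠ t in nhdsWithin a (Set.Ioi a), 0 < slope f a t :=
    ((hasDerivWithinAt_iff_tendsto_slope' Set.self_notMem_Ioi).1 hf.hasDerivWithinAt).eventually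
      (lt_mem_nhds hf')
  obtain ⟨t, hpos, ht⟩ := (hslope.and (Ioo_mem_nhdsGT hab)).exists
  exact ⟨t, ht, (slope_pos_iff_of_le ht.1.le).1 hpos⟩

section NormalizedMetric

variable {X Y : Type*} [Fintype X] {U : X → Y → ℝ}

theorem Utheta_pos (hU : ∀ x y, 0 ≤ U x y) (θ : ℝ) {x : X} {y : Y} (hxy : 0 < U x y) :
    0 < Utheta U θ x y :=
  div_pos (Real.rpow_pos_of_pos hxy θ) <|
    Finset.sum_pos' (fun x' _ => Real.rpow_nonneg (hU x' y) θ)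
      ⟨x, Finset.mem_univ x, Real.rpow_pos_of_pos hxy θ⟩

theorem Utheta_le_one (hU : ∀ x y, 0 ≤ U x y) (θ : ℝ) (x : X) (y : Y) : Utheta U θ x y ≤ 1 := by
  have hnonneg : ∀ x' ∈ Finset.univ, 0 ≤ U x' y ^ θ := fun x' _ => Real.rpow_nonneg (hU x' y) θ
  exact div_le_one_of_le₀ (Finset.single_le_sum hnonneg (Finset.mem_univ x))
    (Finset.sum_nonneg hnonneg)

end NormalizedMetric

section ErrorExponent

variable {X Y : Type*} [Fintype X] [Fintype Y]

/-- The function of `ρ` and `θ` whose supremum over `0 ≤ ρ ≤ 1` and `0 ≤ θ` is the error exponent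
of the decoding metric `U` at rate `R`. Outputs with `W x y = 0` contribute `0` to the inner sum,
also when `U x y = 0`, because `0 / 0 = 0`. -/
noncomputable def exponentFunction (P : X → ℝ) (W U : X → Y → ℝ) (R ρ θ : ℝ) : ℝ :=
  -∑ x, P x * Real.logb 2 (∑ y, W x y / Utheta U θ x y ^ ρ) + ρ * (entropy2 P - R)

/-- The error exponent `E_r(R, U)` of the decoding metric `U` at rate `R`, for the input
distribution `P` and the channel `W`. -/
noncomputable def errorExponent (P : X → ℝ) (W U : X → Y → ℝ) (R : ℝ) : ℝ :=
  ⨆ ρ : Set.Icc (0 : ℝ) 1, ⨆ θ : Set.Ici (0 : ℝ), exponentFunction P W U R ρ θ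

/-- The rate `H(P) + ∑ P W log₂ U_θ` below which the decoding metric `U`, used with the
parameter `θ`, has a positive error exponent. -/
noncomputable def metricRate (P : X → ℝ) (W U : X → Y → ℝ) (θ : ℝ) : ℝ :=
  entropy2 P + ∑ x, P x * ∑ y, W x y * Real.logb 2 (Utheta U θ x y)

/-- The mutual information, in bits, between the input and the output of the channel `W` with
input distribution `P`. Since `Real.logb 2 0 = 0`, pairs of probability zero contribute `0`. -/
noncomputable def mutualInformation2 (P : X → ℝ) (W : X → Y → ℝ) : ℝ :=
  ∑ x, ∑ y, P x * W x y * Real.logb 2 (W x y / ∑ x', P x' * W x' y)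

variable {P : X → ℝ} {W U : X → Y → ℝ} {R : ℝ}

theorem exponentFunction_zero (hW : ∀ x, ∑ y, W x y = 1) (θ : ℝ) :
    exponentFunction P W U R 0 θ = 0 := by
  simp [exponentFunction, hW]

theorem exponentFunction_le_abs (hP : ∀ x, 0 ≤ P x) (hW : ∀ x, W x ∈ stdSimplex ℝ Y)
    (hU : ∀ x y, 0 ≤ U x y) (hPWU : ∀ x y, P x ≠ 0 → W x y ≠ 0 → 0 < U x y)
    {ρ : ℝ} (hρ : ρ ∈ Set.Icc (0 : ℝ) 1) (θ : ℝ) :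
    exponentFunction P W U R ρ θ ≤ |entropy2 P - R| := by
  have hlog : 0 ≤ ∑ x, P x * Real.logb 2 (∑ y, W x y / Utheta U θ x y ^ ρ) := by
    refine Finset.sum_nonneg fun x _ => ?_
    obtain hx | hx := eq_or_ne (P x) 0
    · simp [hx]
    · exact mul_nonneg (hP x) <| Real.logb_nonneg one_lt_two <|
        one_le_sum_div_rpow (hW x) (fun y hy => Utheta_pos hU θ (hPWU x y hx hy))
          (Utheta_le_one hU θ x) hρ.1
  calc exponentFunction P W U R ρ θ
      ≤ ρ * (entropy2 P - R) := add_le_of_nonpos_left (neg_nonpos.2 hlog)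
    _ ≤ ρ * |entropy2 P - R| := mul_le_mul_of_nonneg_left (le_abs_self _) hρ.1
    _ ≤ |entropy2 P - R| := mul_le_of_le_one_left (abs_nonneg _) hρ.2

theorem le_errorExponent (hP : ∀ x, 0 ≤ P x) (hW : ∀ x, W x ∈ stdSimplex ℝ Y)
    (hU : ∀ x y, 0 ≤ U x y) (hPWU : ∀ x y, P x ≠ 0 → W x y ≠ 0 → 0 < U x y)
    {ρ θ : ℝ} (hρ : ρ ∈ Set.Icc (0 : ℝ) 1) (hθ : 0 ≤ θ) :
    exponentFunction P W U R ρ θ ≤ errorExponent P W U R := by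
  have hle (ρ : Set.Icc (0 : ℝ) 1) (θ : Set.Ici (0 : ℝ)) :
      exponentFunction P W U R ρ θ ≤ |entropy2 P - R| :=
    exponentFunction_le_abs hP hW hU hPWU ρ.2 θ
  refine le_ciSup₂ (f := fun (ρ : Set.Icc (0 : ℝ) 1) (θ : Set.Ici (0 : ℝ)) =>
    exponentFunction P W U R ρ θ) ⟨|entropy2 P - R|, ?_⟩ ⟨ρ, hρ⟩ ⟨θ, hθ⟩
  simpa [mem_upperBounds] using hle

theorem hasDerivAt_exponentFunction_zero (hW : ∀ x, ∑ y, W x y = 1) (hU : ∀ x y, 0 ≤ U x y)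
    (hPWU : ∀ x y, P x ≠ 0 → W x y ≠ 0 → 0 < U x y) (θ : ℝ) :
    HasDerivAt (fun ρ => exponentFunction P W U R ρ θ) (metricRate P W U θ - R) 0 := by
  have hterm (x : X) :
      HasDerivAt (fun ρ : ℝ => P x * Real.logb 2 (∑ y, W x y / Utheta U θ x y ^ ρ))
        (P x * -∑ y, W x y * Real.logb 2 (Utheta U θ x y)) 0 := by
    obtain hx | hx := eq_or_ne (P x) 0
    · simpa [hx] using hasDerivAt_const (0 : ℝ) (0 : ℝ)
    · exact (hasDerivAt_logb_sum_div_rpow_zero 2 (hW x) fun y hy =>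
        Utheta_pos hU θ (hPWU x y hx hy)).const_mul (P x)
  refine ((HasDerivAt.fun_sum fun x _ => hterm x).fun_neg.fun_add
    ((hasDerivAt_id (0 : ℝ)).mul_const (entropy2 P - R))).congr_deriv ?_
  simp only [metricRate, mul_neg, Finset.sum_neg_distrib]
  ring

theorem errorExponent_pos_of_lt_metricRate (hP : ∀ x, 0 ≤ P x) (hW : ∀ x, W x ∈ stdSimplex ℝ Y)
    (hU : ∀ x y, 0 ≤ U x y) (hPWU : ∀ x y, P x ≠ 0 → W x y ≠ 0 → 0 < U x y)
    {θ : ℝ} (hθ : 0 ≤ θ) (hR : R < metricRate P W U θ) : 0 < errorExponent P W U R := by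
  have hsum (x : X) : ∑ y, W x y = 1 := (hW x).2
  obtain ⟨ρ, hρ, hpos⟩ := exists_mem_Ioo_lt_of_hasDerivAt_pos
    (hasDerivAt_exponentFunction_zero hsum hU hPWU θ) (sub_pos.2 hR) zero_lt_one
  rw [exponentFunction_zero hsum] at hpos
  exact hpos.trans_le (le_errorExponent hP hW hU hPWU (Set.Ioo_subset_Icc_self hρ) hθ)

end ErrorExponent

section MAPMetric

variable {X Y : Type*} [Fintype X] {P : X → ℝ} {W : X → Y → ℝ}

theorem mul_logb_Utheta_map_one (b : ℝ) (hP : ∀ x, 0 ≤ P x) (hW : ∀ x y, 0 ≤ W x y)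
    (x : X) (y : Y) :
    P x * W x y * Real.logb b (Utheta (fun x y => P x * W x y) 1 x y) =
      P x * W x y * Real.logb b (W x y / ∑ x', P x' * W x' y) +
        P x * W x y * Real.logb b (P x) := by
  obtain hxy | hxy := eq_or_ne (P x * W x y) 0
  · simp only [hxy, zero_mul, add_zero]
  · have hnonneg (x' : X) : 0 ≤ P x' * W x' y := mul_nonneg (hP x') (hW x' y)
    have houtput : 0 < ∑ x', P x' * W x' y :=
      Finset.sum_pos' (fun x' _ => hnonneg x')
        ⟨x, Finset.mem_univ x, (hnonneg x).lt_of_ne' hxy⟩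
    have hposterior : Utheta (fun x y => P x * W x y) 1 x y =
        P x * (W x y / ∑ x', P x' * W x' y) := by
      simp only [Utheta, Real.rpow_one, mul_div_assoc]
    rw [hposterior, Real.logb_mul (left_ne_zero_of_mul hxy)
      (div_ne_zero (right_ne_zero_of_mul hxy) houtput.ne')]
    ring

theorem metricRate_map_one [Fintype Y] (hP : ∀ x, 0 ≤ P x) (hW : ∀ x, W x ∈ stdSimplex ℝ Y) :
    metricRate P W (fun x y => P x * W x y) 1 = mutualInformation2 P W := by
  have hinput : ∑ x, ∑ y, P x * W x y * Real.logb 2 (P x) = -entropy2 P := by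
    simp only [← Finset.sum_mul, ← Finset.mul_sum, (hW _).2, mul_one, entropy2, neg_neg]
  calc metricRate P W (fun x y => P x * W x y) 1
      = entropy2 P + ∑ x, ∑ y,
          P x * W x y * Real.logb 2 (Utheta (fun x y => P x * W x y) 1 x y) := by
        simp only [metricRate, Finset.mul_sum, mul_assoc]
    _ = entropy2 P + (mutualInformation2 P W + -entropy2 P) := by
        simp only [mul_logb_Utheta_map_one 2 hP fun x => (hW x).1, Finset.sum_add_distrib, hinput,
          mutualInformation2]
    _ = mutualInformation2 P W := by ring

end MAPMetric

theorem map_metric_achieves_mutual_information_general {X Y : Type*} [Fintype X] [Fintype Y]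
    {P : X → ℝ} (hP : P ∈ stdSimplex ℝ X) {W : X → Y → ℝ} (hW : ∀ x, W x ∈ stdSimplex ℝ Y)
    {R : ℝ} (hR : R < mutualInformation2 P W) :
    0 < errorExponent P W (fun x y => P x * W x y) R := by
  have hnonneg (x : X) (y : Y) : 0 ≤ P x * W x y := mul_nonneg (hP.1 x) ((hW x).1 y)
  refine errorExponent_pos_of_lt_metricRate hP.1 hW hnonneg
    (fun x y hx hy => (hnonneg x y).lt_of_ne' (mul_ne_zero hx hy)) zero_le_one ?_
  rwa [metricRate_map_one hP.1 hW]

/-- The mismatched MAP metric `U_MAP(x,y) = P_X(x)W(y|x)` has a strictly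
positive error exponent
`E_r(R,U_MAP) = max_{ρ∈[0,1]} sup_{θ≥0} { −Σ_x P_X(x) log₂( Σ_y W(y|x)/U_θ(x|y)^ρ )
+ ρ(H(P_X) − R) }` at every rate `R < I(X;Y)`; i.e., it achieves every rate below the
mutual information. -/
theorem map_metric_achieves_mutual_information
    {X Y : Type*} [Fintype X] [Fintype Y] [Nonempty X] [Nonempty Y]
    (P : X → ℝ) (hP0 : ∀ x, 0 < P x) (hP1 : ∑ x, P x = 1)
    (W : X → Y → ℝ) (hW : ∀ x y, 0 < W x y) (hWsum : ∀ x, ∑ y, W x y = 1)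
    (R : ℝ)
    (hR : R < ∑ x, ∑ y, P x * W x y *
      Real.logb 2 (W x y / ∑ x', P x' * W x' y)) :
    0 < ⨆ ρ : Set.Icc (0:ℝ) 1, ⨆ θ : Set.Ici (0:ℝ),
        (-∑ x, P x * Real.logb 2
            (∑ y, W x y / Utheta (fun x y => P x * W x y) θ.1 x y ^ (ρ.1 : ℝ))
          + ρ.1 * (entropy2 P - R)) :=
  map_metric_achieves_mutual_information_general (W := W) ⟨fun x => (hP0 x).le, hP1⟩
    (fun x => ⟨fun y => (hW x y).le, hWsum x⟩) hR
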